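/- Soundness of backwards simulations for relative security: Let S, T be types of states, Dₛ, Dₜ types of directives, and Oₛ, Oₜ types of observations, with multi-step execution relations for source (from a state in S, under a list of Dₛ, producing a list of Oₛ) and target (from a state in T, under a list of Dₜ, producing a list of Oₜ), a relation R between S and T, and functions σ : Dₜ → Dₛ and τ : Oₛ → Oₜ. Suppose the backwards simulation property: whenever R s t and the target executes from t under directives D producing observations O, there exists a source execution from s under directives (map σ D) producing observations O' with map τ O' = O. Then relative security follows: if R s1 t1 and R s2 t2 and s1, s2 are observationally equivalent under the source semantics (for every source directive list, any two source traces from s1 and s2 are prefix-comparable), then t1 and t2 are observationally equivalent under the target semantics (for every target directive list, any two target traces from t1 and t2 are prefix-comparable). -/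

import Mathlib

namespace SpecIBTPaper

section TraceSemantics

variable {S T Ds Dt Os Ot : Type*}

/-- Observational equivalence of two states under a multi-step trace semantics, where `exec s D O`
means that `s` can produce the trace `O` under the directives `D`. Traces are compared up to prefix
because executions under the same directives may have taken different numbers of steps. -/
def ObsEquiv (exec : S → List Ds → List Os → Prop) (s₁ s₂ : S) : Prop :=
  ∀ (D : List Ds) (O₁ O₂ : List Os), exec s₁ D O₁ → exec s₂ D O₂ → O₁ <+: O₂ ∨ O₂ <+: O₁

/-- Backwards simulation of a target by a source semantics. The translations `σ` and `τ` act on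
whole lists, so that a single directive or observation may correspond to several or to none;
pointwise translations are the case `σ = List.map _`, `τ = List.map _`. -/
def IsBackwardsSimulation (srcExec : S → List Ds → List Os → Prop)
    (tgtExec : T → List Dt → List Ot → Prop) (R : S → T → Prop)
    (σ : List Dt → List Ds) (τ : List Os → List Ot) : Prop :=
  ∀ (s : S) (t : T) (D : List Dt) (O : List Ot),
    R s t → tgtExec t D O → ∃ O' : List Os, srcExec s (σ D) O' ∧ τ O' = O

theorem backwards_simulation_soundness_general {srcExec : S → List Ds → List Os → Prop}
    {tgtExec : T → List Dt → List Ot → Prop} {R : S → T → Prop}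
    {σ : List Dt → List Ds} {τ : List Os → List Ot}
    (hτ : ∀ ⦃O O' : List Os⦄, O <+: O' → τ O <+: τ O')
    (bsim : IsBackwardsSimulation srcExec tgtExec R σ τ) {s₁ s₂ : S} {t₁ t₂ : T}
    (h₁ : R s₁ t₁) (h₂ : R s₂ t₂) (hsrc : ObsEquiv srcExec s₁ s₂) :
    ObsEquiv tgtExec t₁ t₂ := by
  intro D _ _ htgt₁ htgt₂
  obtain ⟨O₁, hsrc₁, rfl⟩ := bsim s₁ t₁ D _ h₁ htgt₁
  obtain ⟨O₂, hsrc₂, rfl⟩ := bsim s₂ t₂ D _ h₂ htgt₂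
  have comparable : O₁ <+: O₂ ∨ O₂ <+: O₁ := hsrc (σ D) O₁ O₂ hsrc₁ hsrc₂
  exact comparable.imp (fun h => hτ h) (fun h => hτ h)

end TraceSemantics

/-- Soundness of backwards simulations for relative security,
    Theorem 2 of Olmos et al., used for the linearization proof. -/
theorem backwards_simulation_soundness
    {S T Ds Dt Os Ot : Type}
    (srcExec : S → List Ds → List Os → Prop)
    (tgtExec : T → List Dt → List Ot → Prop)
    (R : S → T → Prop) (σ : Dt → Ds) (τ : Os → Ot)
    (bsim : ∀ (s : S) (t : T) (D : List Dt) (O : List Ot),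
      R s t → tgtExec t D O → ∃ O' : List Os, srcExec s (D.map σ) O' ∧ O'.map τ = O)
    (s1 s2 : S) (t1 t2 : T)
    (h1 : R s1 t1) (h2 : R s2 t2)
    (hsrc : ∀ (D : List Ds) (O1 O2 : List Os),
      srcExec s1 D O1 → srcExec s2 D O2 → O1 <+: O2 ∨ O2 <+: O1) :
    ∀ (D : List Dt) (O1 O2 : List Ot),
      tgtExec t1 D O1 → tgtExec t2 D O2 → O1 <+: O2 ∨ O2 <+: O1 :=
  backwards_simulation_soundness_general (fun _ _ h => h.map τ) bsim h1 h2 hsrc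

end SpecIBTPaper
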